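/- Let R = k[X11,X12,X21,X22]/(X11X22 − X12X21), p = (x12, x11), and ℓ ≥ 1. Then Hom_R(p^ℓ, p^ℓ) ≅ R and Ext^1_R(p^ℓ, p^ℓ) = 0, while Ext^2_R(p^ℓ, p^ℓ) ≠ 0; i.e., p^ℓ is exactly 1-semidualizing. -/

import Mathlib

open CategoryTheory MvPolynomial

/-!
The ring `R` is the degree `0` part of its Cox ring `k[s₀, s₁, x₀, x₁]`, graded by `Cl(R) = ℤ` with
`deg sᵢ = 1` and `deg xⱼ = -1`. Let `Mₙ` be the degree `n` part. Then `pˡ ≅ M₋ₗ`, and since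
`Hom(Mₘ, Mₙ) = Mₙ₋ₘ`, the endomorphisms of `M₋ₗ` are the scalars.

The groups `Ext` come from strands of two Koszul complexes. The sequences
`0 → M₁ → M₀ × M₋ⱼ → M₋ⱼ₋₁ → 0` of `x₀ʲ⁺¹, x₁` kill `Ext¹(M₋ⱼ, M₋ₗ)` for `j ≤ l + 1` by induction:
every element of `M₋ₗ₋₁` lies in `(x₀ʲ⁺¹, x₁)` when `j ≤ l`. With `j = l - 1` they show that
`Ext²(M₋ₗ, M₋ₗ) = 0` would give `Ext¹(M₁, M₋ₗ) = 0`. The sequence `0 → M₋₁ → M₀ × M₀ → M₁ → 0` of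
`s₀, s₁` excludes this, because it would put `x₀ˡ` into `(s₀, s₁)`.
-/

universe u

section AbelianExt

variable {C : Type*} [Category* C] [Abelian C]

theorem subsingleton_ext_iff_subsingleton_abelianExt {R : Type*} [CommRing R] [Linear R C]
    [EnoughProjectives C] [HasExt C] (X Y : C) (n : ℕ) :
    Subsingleton (((Ext R C (n + 1)).obj (Opposite.op X)).obj Y) ↔
      Subsingleton (Abelian.Ext X Y (n + 1)) := by
  let P := projectiveResolution X
  have cocycle_bounds_iff_ext :
      (∀ f : P.complex.X (n + 1) ⟶ Y, P.complex.d (n + 2) (n + 1) ≫ f = 0 →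
        ∃ g : P.complex.X n ⟶ Y, P.complex.d (n + 1) n ≫ g = f) ↔
      Subsingleton (((Ext R C (n + 1)).obj (Opposite.op X)).obj Y) := by
    rw [← ModuleCat.isZero_iff_subsingleton, (P.isoExt (n + 1) Y).isZero_iff,
      ← HomologicalComplex.exactAt_iff_isZero_homology,
      HomologicalComplex.exactAt_iff' _ n (n + 1) (n + 2) (by simp) (by simp),
      ShortComplex.moduleCat_exact_iff]
    rfl
  rw [← cocycle_bounds_iff_ext, subsingleton_iff_forall_eq 0]
  constructor
  · intro bounds α
    obtain ⟨f, hf, rfl⟩ := P.extMk_surjective α (n + 2) rfl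
    exact (P.extMk_eq_zero_iff f (n + 2) rfl hf n rfl).2 (bounds f hf)
  · intro vanish f hf
    exact (P.extMk_eq_zero_iff f (n + 2) rfl hf n rfl).1 (vanish _)

variable [HasExt C] {S : ShortComplex C} (hS : S.ShortExact) {Y : C}
include hS

theorem subsingleton_abelianExt_one_of_forall_extend
    [Subsingleton (Abelian.Ext S.X₂ Y 1)]
    (extend : ∀ f : S.X₁ ⟶ Y, ∃ g : S.X₂ ⟶ Y, S.f ≫ g = f) :
    Subsingleton (Abelian.Ext S.X₃ Y 1) := by
  refine subsingleton_of_forall_eq 0 fun α ↦ ?_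
  obtain ⟨β, rfl⟩ := Abelian.Ext.contravariant_sequence_exact₃ hS Y α (Subsingleton.elim _ _)
    (add_zero 1)
  obtain ⟨f, rfl⟩ := Abelian.Ext.addEquiv₀.symm.surjective β
  obtain ⟨g, rfl⟩ := extend f
  simp [← Abelian.Ext.mk₀_comp_mk₀]

theorem exists_extend_of_subsingleton_abelianExt_one [Subsingleton (Abelian.Ext S.X₃ Y 1)]
    (f : S.X₁ ⟶ Y) : ∃ g : S.X₂ ⟶ Y, S.f ≫ g = f := by
  obtain ⟨γ, hγ⟩ := Abelian.Ext.contravariant_sequence_exact₁ hS Y (Abelian.Ext.mk₀ f)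
    (add_zero 1) (Subsingleton.elim _ _)
  obtain ⟨g, rfl⟩ := Abelian.Ext.addEquiv₀.symm.surjective γ
  refine ⟨g, (Abelian.Ext.mk₀_bijective _ _).injective ?_⟩
  simpa using hγ

theorem subsingleton_abelianExt_left {n : ℕ} [Subsingleton (Abelian.Ext S.X₂ Y n)]
    [Subsingleton (Abelian.Ext S.X₃ Y (1 + n))] : Subsingleton (Abelian.Ext S.X₁ Y n) := by
  refine subsingleton_of_forall_eq 0 fun α ↦ ?_
  obtain ⟨β, rfl⟩ := Abelian.Ext.contravariant_sequence_exact₁ hS Y α rfl (Subsingleton.elim _ _)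
  rw [Subsingleton.elim β 0, Abelian.Ext.comp_zero]

theorem subsingleton_abelianExt_middle {n : ℕ} [Subsingleton (Abelian.Ext S.X₁ Y n)]
    [Subsingleton (Abelian.Ext S.X₃ Y n)] : Subsingleton (Abelian.Ext S.X₂ Y n) := by
  refine subsingleton_of_forall_eq 0 fun α ↦ ?_
  obtain ⟨β, rfl⟩ := Abelian.Ext.contravariant_sequence_exact₂ hS Y α (Subsingleton.elim _ _)
  rw [Subsingleton.elim β 0, Abelian.Ext.comp_zero]

end AbelianExt

theorem subsingleton_abelianExt_congr {C : Type*} [Category* C] [Abelian C] [HasExt C] {X Y : C}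
    (e : X ≅ Y) (n : ℕ) :
    Subsingleton (Abelian.Ext X X n) ↔ Subsingleton (Abelian.Ext Y Y n) :=
  (((Abelian.extFunctor n).mapIso e.symm.op).app X ≪≫
    ((Abelian.extFunctor n).obj (.op Y)).mapIso e).addCommGroupIsoToAddEquiv.subsingleton_congr

section ModuleExt

variable {R : Type u} [CommRing R] {M₁ M₂ N : Type u} [AddCommGroup M₁] [Module R M₁]
  [AddCommGroup M₂] [Module R M₂] [AddCommGroup N] [Module R N] {n : ℕ}

instance subsingleton_abelianExt_prod
    [Subsingleton (Abelian.Ext (ModuleCat.of R M₁) (ModuleCat.of R N) n)]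
    [Subsingleton (Abelian.Ext (ModuleCat.of R M₂) (ModuleCat.of R N) n)] :
    Subsingleton (Abelian.Ext (ModuleCat.of R (M₁ × M₂)) (ModuleCat.of R N) n) :=
  subsingleton_abelianExt_middle (S := ModuleCat.shortComplexOfCompEqZero _ _
      (LinearMap.snd_comp_inl R M₁ M₂))
    (ModuleCat.shortComplex_shortExact _ .inl_snd LinearMap.inl_injective
      LinearMap.snd_surjective)

instance subsingleton_abelianExt_of_projective [Module.Projective R M₁] :
    Subsingleton (Abelian.Ext (ModuleCat.of R M₁) (ModuleCat.of R N) (n + 1)) :=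
  Abelian.Ext.subsingleton_of_projective _ _ _

end ModuleExt

section GradedPieces

variable {R S ι : Type*} [CommSemiring R] [CommSemiring S] [Algebra R S]

section Multiplication

variable [AddMonoid ι] {𝒜 : ι → Submodule R S} [SetLike.GradedMonoid 𝒜] {i m n : ι}

/-- Multiplication by a homogeneous element, as a map between graded pieces. The target degree is
an independent variable `n`, to spare casts along equalities of degrees. -/
def gradedMul (f : 𝒜 i) (h : i + m = n) : 𝒜 m →ₗ[R] 𝒜 n :=
  (LinearMap.mulLeft R (f : S)).restrict fun _ hz ↦ h ▸ SetLike.mul_mem_graded f.2 hz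

@[simp]
theorem coe_gradedMul_apply (f : 𝒜 i) (h : i + m = n) (z : 𝒜 m) :
    (gradedMul f h z : S) = f * z :=
  rfl

theorem gradedMul_injective {f : 𝒜 i} (hf : IsLeftRegular (f : S)) (h : i + m = n) :
    Function.Injective (gradedMul f h : 𝒜 m →ₗ[R] 𝒜 n) :=
  fun _ _ hz ↦ Subtype.ext (hf (congrArg Subtype.val hz))

end Multiplication

section Hom

variable [AddMonoid ι] {𝒜 : ι → Submodule R S} {m n k c : ι}

/-- The ratio `φ z / z` does not depend on `z`: this is seen after multiplying by `w`, which moves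
`𝒜 m` into the scalars. Coprimality of `u` and `v` makes the ratio an element of `S`. -/
theorem exists_eq_mul_of_coprime [SetLike.GradedMonoid 𝒜] (scalars : 𝒜 0 ≤ 1)
    {w : S} (hw : w ∈ 𝒜 c) (hcm : c + m = 0) (w_regular : IsLeftRegular w)
    (u v : 𝒜 m) (u_regular : IsLeftRegular (u : S))
    (coprime : ∀ z : S, (u : S) ∣ v * z → (u : S) ∣ z)
    (mem_of_mul_mem : ∀ z : S, u * z ∈ 𝒜 n → z ∈ 𝒜 k) (φ : 𝒜 m →ₗ[R] 𝒜 n) :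
    ∃ g : 𝒜 k, ∀ z : 𝒜 m, (φ z : S) = g * z := by
  have scalar_of_mem (z : 𝒜 m) : ∃ r : R, algebraMap R S r = w * z :=
    Submodule.mem_one.1 (scalars (hcm ▸ SetLike.mul_mem_graded hw z.2))
  have cross (z z' : 𝒜 m) : (z : S) * φ z' = z' * φ z := by
    obtain ⟨r, hr⟩ := scalar_of_mem z
    obtain ⟨r', hr'⟩ := scalar_of_mem z'
    have scaled : r • z' = r' • z := Subtype.ext <| by
      simp only [Submodule.coe_smul, Algebra.smul_def, hr, hr']
      ring
    have h := congrArg (fun y ↦ (φ y : S)) scaled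
    simp only [map_smul, Submodule.coe_smul, Algebra.smul_def, hr, hr', mul_assoc] at h
    exact w_regular h
  obtain ⟨g, hg⟩ := coprime (φ u) ⟨φ v, cross v u⟩
  refine ⟨⟨g, mem_of_mul_mem g (hg ▸ (φ u).2)⟩, fun z ↦ u_regular ?_⟩
  calc (u : S) * φ z = z * φ u := cross u z
    _ = u * (g * z) := by rw [hg]; ring

end Hom

end GradedPieces

section Koszul

variable {R S : Type u} {ι : Type*} [CommRing R] [CommRing S] [Algebra R S] [AddMonoid ι]
  {𝒜 : ι → Submodule R S} [SetLike.GradedMonoid 𝒜] {i j m a b c : ι}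
  (f : 𝒜 i) (g : 𝒜 j) (hfa : i + a = m) (hgb : j + b = m) (hgc : j + c = a) (hfc : i + c = b)

/-- The degree `m` strand `𝒜 c ⟶ 𝒜 a × 𝒜 b ⟶ 𝒜 m` of the Koszul complex of the homogeneous elements
`f` and `g`, with differentials `z ↦ (g z, -f z)` and `(x, y) ↦ f x + g y`. -/
noncomputable abbrev koszulStrand : ShortComplex (ModuleCat R) :=
  ModuleCat.shortComplexOfCompEqZero
    ((gradedMul g hgc : 𝒜 c →ₗ[R] 𝒜 a).prod (-gradedMul f hfc : 𝒜 c →ₗ[R] 𝒜 b))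
    ((gradedMul f hfa).coprod (gradedMul g hgb)) <| by
      ext z
      simp [mul_left_comm]

theorem koszulStrand_shortExact (f_regular : IsLeftRegular (f : S))
    (coprime : ∀ z : S, (f : S) ∣ g * z → (f : S) ∣ z)
    (mem_of_mul_mem : ∀ z : S, f * z ∈ 𝒜 b → z ∈ 𝒜 c)
    (generate : ∀ z ∈ 𝒜 m, ∃ x ∈ 𝒜 a, ∃ y ∈ 𝒜 b, z = f * x + g * y) :
    (koszulStrand f g hfa hgb hgc hfc).ShortExact := by
  refine ModuleCat.shortComplex_shortExact _ ?exact ?injective ?surjective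
  case injective =>
    intro z z' h
    exact gradedMul_injective f_regular hfc (neg_injective (congrArg Prod.snd h))
  case surjective =>
    rintro ⟨z, hz⟩
    obtain ⟨x, hx, y, hy, rfl⟩ := generate z hz
    exact ⟨(⟨x, hx⟩, ⟨y, hy⟩), Subtype.ext rfl⟩
  case exact =>
    refine .of_comp_of_mem_range (funext (ShortComplex.moduleCat_zero_apply _)) ?_
    rintro ⟨x, y⟩ h
    have relation : (f : S) * x + g * y = 0 := congrArg Subtype.val h
    obtain ⟨z, hz⟩ := coprime y ⟨-x, by linear_combination relation⟩
    refine ⟨-⟨z, mem_of_mul_mem z (hz ▸ y.2)⟩,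
      Prod.ext (Subtype.ext (f_regular ?_)) (Subtype.ext ?_)⟩
    · change (f : S) * (g * -z) = f * x
      linear_combination -relation + (g : S) * hz
    · change -((f : S) * -z) = y
      rw [hz, mul_neg, neg_neg]

end Koszul

section WeightedHomogeneous

variable {σ K M : Type*} [CommSemiring K] [AddCommMonoid M] [IsLeftCancelAdd M] {w : σ → M}
  {m n a b : M} {u v : σ →₀ ℕ} {f : MvPolynomial σ K}

theorem isWeightedHomogeneous_divMonomial (hf : IsWeightedHomogeneous w f n)
    (hu : Finsupp.weight w u + a = n) : IsWeightedHomogeneous w (f.divMonomial u) a := by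
  intro d hd
  rw [coeff_divMonomial] at hd
  rw [← add_right_inj (Finsupp.weight w u), ← map_add, hf hd, hu]

theorem isWeightedHomogeneous_of_monomial_mul
    (h : IsWeightedHomogeneous w (monomial u 1 * f) n) (hu : Finsupp.weight w u + a = n) :
    IsWeightedHomogeneous w f a := by
  simpa only [divMonomial_monomial_mul] using isWeightedHomogeneous_divMonomial h hu

theorem exists_eq_monomial_mul_add_monomial_mul (hf : IsWeightedHomogeneous w f n)
    (hu : Finsupp.weight w u + a = n) (hv : Finsupp.weight w v + b = n)
    (cover : ∀ d, Finsupp.weight w d = n → u ≤ d ∨ v ≤ d) :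
    ∃ g h, IsWeightedHomogeneous w g a ∧ IsWeightedHomogeneous w h b ∧
      f = monomial u 1 * g + monomial v 1 * h := by
  have coeff_mod {d : σ →₀ ℕ} (hd : coeff d (f.modMonomial u) ≠ 0) :
      ¬u ≤ d ∧ coeff d (f.modMonomial u) = coeff d f := by
    have not_le : ¬u ≤ d := fun h ↦ hd (coeff_modMonomial_of_le f h)
    exact ⟨not_le, coeff_modMonomial_of_not_le f not_le⟩
  have mod_homogeneous : IsWeightedHomogeneous w (f.modMonomial u) n := fun d hd ↦
    hf ((coeff_mod hd).2 ▸ hd)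
  have dvd_mod : monomial v 1 ∣ f.modMonomial u := by
    rw [monomial_one_dvd_iff_modMonomial_eq_zero]
    ext d
    by_contra! hd
    have not_le : ¬v ≤ d := fun h ↦ hd (by rw [coeff_modMonomial_of_le _ h, coeff_zero])
    rw [coeff_modMonomial_of_not_le _ not_le, coeff_zero] at hd
    exact not_le ((cover d (mod_homogeneous hd)).resolve_left (coeff_mod hd).1)
  obtain ⟨h, hh⟩ := dvd_mod
  exact ⟨f.divMonomial u, h, isWeightedHomogeneous_divMonomial hf hu,
    isWeightedHomogeneous_of_monomial_mul (hh ▸ mod_homogeneous) hv,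
    by rw [← hh, divMonomial_add_modMonomial]⟩

end WeightedHomogeneous

theorem monomial_one_dvd_of_dvd_monomial_mul {σ K : Type*} [CommSemiring K] {u v : σ →₀ ℕ}
    {f : MvPolynomial σ K} (disjoint : Disjoint u v)
    (h : monomial u (1 : K) ∣ monomial v 1 * f) : monomial u 1 ∣ f := by
  rw [monomial_one_dvd_iff_modMonomial_eq_zero] at h ⊢
  ext d
  by_cases hd : u ≤ d
  · rw [coeff_modMonomial_of_le _ hd, coeff_zero]
  · have not_le : ¬u ≤ v + d := by
      refine fun h ↦ hd fun i ↦ ?_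
      have min_eq_zero : min (u i) (v i) = 0 := DFunLike.congr_fun disjoint.eq_bot i
      have le_add : u i ≤ v i + d i := h i
      lia
    rw [coeff_modMonomial_of_not_le _ hd, ← one_mul (coeff d f), ← coeff_monomial_mul,
      ← coeff_modMonomial_of_not_le _ not_le, h, coeff_zero, coeff_zero]

theorem X_pow_dvd_of_dvd_X_pow_mul {σ K : Type*} [CommSemiring K] {i j : σ} (hij : i ≠ j)
    {p q : ℕ} {f : MvPolynomial σ K} (h : X i ^ p ∣ X j ^ q * f) : X i ^ p ∣ f := by
  simp only [X_pow_eq_monomial] at h ⊢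
  refine monomial_one_dvd_of_dvd_monomial_mul (Finsupp.disjoint_iff.2 ?_) h
  exact (Finset.disjoint_singleton.2 hij).mono Finsupp.support_single_subset
    Finsupp.support_single_subset

section SegreMap

variable {k : Type*} [CommRing k]

variable (k) in
/-- The Cox ring `k[s₀, s₁, x₀, x₁]` of the determinantal ring, where `sᵢ` and `xⱼ` are the
variables indexed by `Sum.inl i` and `Sum.inr j`. -/
abbrev CoxRing : Type _ :=
  MvPolynomial (Fin 2 ⊕ Fin 2) k

/-- The grading of the Cox ring by the class group `ℤ`: each `sᵢ` has degree `1` and each `xⱼ` has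
degree `-1`. -/
def coxWeight : Fin 2 ⊕ Fin 2 → ℤ :=
  Sum.elim 1 (-1)

theorem weight_coxWeight_apply (d : Fin 2 ⊕ Fin 2 →₀ ℕ) :
    Finsupp.weight coxWeight d =
      d (.inl 0) + d (.inl 1) - (d (.inr 0) + d (.inr 1)) := by
  rw [Finsupp.weight_apply, Finsupp.sum_fintype _ _ (by simp)]
  simp [coxWeight, sub_eq_add_neg, add_comm]

variable (k) in
/-- The `k`-algebra map `X_ij ↦ sᵢ xⱼ`, whose image is the homogeneous coordinate ring of the Segre
embedding of `ℙ¹ × ℙ¹`. -/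
noncomputable def segreMap :
    MvPolynomial (Fin 2 × Fin 2) k →ₐ[k] CoxRing k :=
  aeval fun ij ↦ X (.inl ij.1) * X (.inr ij.2)

@[simp]
theorem segreMap_X (i j : Fin 2) : segreMap k (X (i, j)) = X (.inl i) * X (.inr j) :=
  aeval_X _ _

/-- The exponent of the image of a monomial under `segreMap`: row and column sums. -/
noncomputable def segreExponent (c : Fin 2 × Fin 2 →₀ ℕ) : Fin 2 ⊕ Fin 2 →₀ ℕ :=
  ∑ ij, c ij • (.single (.inl ij.1) 1 + .single (.inr ij.2) 1)

theorem segreMap_monomial_one (c : Fin 2 × Fin 2 →₀ ℕ) :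
    segreMap k (monomial c 1) = monomial (segreExponent c) 1 := by
  rw [segreMap, aeval_monomial, Finsupp.prod_pow, map_one, one_mul]
  simp only [segreExponent, monomial_sum_one, X, monomial_mul, monomial_pow, one_mul, one_pow]

/-- The `2 × 2` matrix of exponents with row and column sums `d` that vanishes at `(0, 1)` or at
`(1, 0)`. -/
noncomputable def segreExponentSection (d : Fin 2 ⊕ Fin 2 →₀ ℕ) : Fin 2 × Fin 2 →₀ ℕ :=
  Finsupp.equivFunOnFinite.symm fun ij ↦
    !![min (d (.inl 0)) (d (.inr 0)), d (.inl 0) - d (.inr 0);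
      d (.inr 0) - d (.inl 0), min (d (.inl 1)) (d (.inr 1))] ij.1 ij.2

theorem segreExponent_segreExponentSection {d : Fin 2 ⊕ Fin 2 →₀ ℕ}
    (hd : Finsupp.weight coxWeight d = 0) : segreExponent (segreExponentSection d) = d := by
  rw [weight_coxWeight_apply] at hd
  ext i
  rcases i with i | i <;> fin_cases i <;>
    simp [segreExponent, segreExponentSection, Fintype.sum_prod_type] <;> lia

theorem pow_mul_pow_eq_of_mul_eq_mul {A : Type*} [CommMonoid A] {x₀₀ x₀₁ x₁₀ x₁₁ : A}
    (h : x₀₀ * x₁₁ = x₀₁ * x₁₀) (a b c d : ℕ) :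
    x₀₀ ^ a * x₀₁ ^ b * (x₁₀ ^ c * x₁₁ ^ d) =
      x₀₀ ^ min (a + b) (a + c) * x₀₁ ^ (a + b - (a + c)) *
        (x₁₀ ^ (a + c - (a + b)) * x₁₁ ^ min (c + d) (b + d)) := by
  obtain ⟨m, b, c, rfl, rfl, hbc⟩ :
      ∃ m b' c', b = m + b' ∧ c = m + c' ∧ (b' = 0 ∨ c' = 0) :=
    ⟨min b c, b - c, c - b, by lia, by lia, by lia⟩
  calc
    _ = x₀₀ ^ a * (x₀₁ * x₁₀) ^ m * x₀₁ ^ b * (x₁₀ ^ c * x₁₁ ^ d) := by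
      rw [mul_pow, pow_add, pow_add]; ac_rfl
    _ = x₀₀ ^ (a + m) * x₀₁ ^ b * (x₁₀ ^ c * x₁₁ ^ (m + d)) := by
      rw [← h, mul_pow, pow_add, pow_add]; ac_rfl
    _ = _ := by congr 3 <;> lia

variable (k) in
/-- The ideal of the generic `2 × 2` determinant. -/
noncomputable def detIdeal : Ideal (MvPolynomial (Fin 2 × Fin 2) k) :=
  Ideal.span {X (0, 0) * X (1, 1) - X (0, 1) * X (1, 0)}

theorem mk_monomial_segreExponentSection (c : Fin 2 × Fin 2 →₀ ℕ) :
    Ideal.Quotient.mk (detIdeal k) (monomial (segreExponentSection (segreExponent c)) 1) =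
      Ideal.Quotient.mk (detIdeal k) (monomial c 1) := by
  have det_eq_zero : Ideal.Quotient.mk (detIdeal k) (X (0, 0)) * Ideal.Quotient.mk _ (X (1, 1)) =
      Ideal.Quotient.mk _ (X (0, 1)) * Ideal.Quotient.mk _ (X (1, 0)) := by
    rw [← map_mul, ← map_mul, Ideal.Quotient.mk_eq_mk_iff_sub_mem]
    exact Ideal.mem_span_singleton_self _
  simp only [monomial_eq, map_one, one_mul, Finsupp.prod_pow, Fintype.prod_prod_type,
    Fin.prod_univ_two, map_mul, map_pow]
  rw [pow_mul_pow_eq_of_mul_eq_mul det_eq_zero (c (0, 0)) (c (0, 1)) (c (1, 0)) (c (1, 1))]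
  simp [segreExponentSection, segreExponent, Fintype.sum_prod_type]

theorem ker_segreMap : RingHom.ker (segreMap k) = detIdeal k := by
  let σ := (basisMonomials (Fin 2 ⊕ Fin 2) k).constr k fun d ↦
    Ideal.Quotient.mkₐ k (detIdeal k) (monomial (segreExponentSection d) 1)
  have retraction : σ ∘ₗ (segreMap k).toLinearMap =
      (Ideal.Quotient.mkₐ k (detIdeal k)).toLinearMap := by
    refine (basisMonomials _ k).ext fun c ↦ ?_
    have σ_monomial := (basisMonomials (Fin 2 ⊕ Fin 2) k).constr_basis k
      (fun d ↦ Ideal.Quotient.mkₐ k (detIdeal k) (monomial (segreExponentSection d) 1))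
      (segreExponent c)
    simp only [coe_basisMonomials] at σ_monomial ⊢
    simpa [segreMap_monomial_one, σ] using σ_monomial.trans (mk_monomial_segreExponentSection c)
  refine le_antisymm (fun f hf ↦ ?_) ?_
  · rw [← Ideal.Quotient.eq_zero_iff_mem]
    have mk_eq := LinearMap.congr_fun retraction f
    simpa [RingHom.mem_ker.1 hf] using mk_eq.symm
  · rw [detIdeal, Ideal.span_singleton_le_iff_mem, RingHom.mem_ker]
    simp only [map_sub, map_mul, segreMap_X]
    ring

theorem mem_range_segreMap {f : CoxRing k} :
    f ∈ (segreMap k).range ↔ IsWeightedHomogeneous coxWeight f 0 := by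
  constructor
  · rintro ⟨g, rfl⟩
    induction g using MvPolynomial.induction_on with
    | C a => simpa using isWeightedHomogeneous_C coxWeight a
    | add p q hp hq => simpa using hp.add hq
    | mul_X p ij hp =>
      have hX := (isWeightedHomogeneous_X k coxWeight (.inl ij.1)).mul
        (isWeightedHomogeneous_X k coxWeight (.inr ij.2))
      simpa [coxWeight, ← segreMap_X] using hp.mul hX
  · intro hf
    rw [f.as_sum]
    refine Subalgebra.sum_mem _ fun d hd ↦ ?_
    have monomial_mem : monomial d 1 ∈ (segreMap k).range := by
      rw [← segreExponent_segreExponentSection (hf (mem_support_iff.1 hd)),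
        ← segreMap_monomial_one]
      exact AlgHom.mem_range_self _ _
    simpa only [smul_monomial, smul_eq_mul, mul_one] using
      Subalgebra.smul_mem _ monomial_mem (coeff d f)

end SegreMap

section CoxPieces

variable {k R : Type u} [CommRing k] [CommRing R] [Algebra R (CoxRing k)]

variable (k R) in
/-- `R` is the degree `0` part of the Cox ring, via its algebra structure. -/
class IsCoxDegreeZero : Prop where
  algebraMap_injective : Function.Injective (algebraMap R (CoxRing k))
  mem_range_algebraMap {f : CoxRing k} :
    f ∈ (algebraMap R (CoxRing k)).range ↔ IsWeightedHomogeneous coxWeight f 0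

variable [IsCoxDegreeZero k R]

variable (k R) in
/-- The degree `n` part of the Cox ring, as an `R`-module. -/
def coxPiece (n : ℤ) : Submodule R (CoxRing k) where
  carrier := {f | IsWeightedHomogeneous coxWeight f n}
  add_mem' := .add
  zero_mem' := isWeightedHomogeneous_zero ..
  smul_mem' r f hf := by
    rw [Algebra.smul_def, ← zero_add n]
    exact (IsCoxDegreeZero.mem_range_algebraMap.1 ⟨r, rfl⟩).mul hf

instance : SetLike.GradedMonoid (coxPiece k R) where
  one_mem := isWeightedHomogeneous_one ..
  mul_mem _ _ _ _ := .mul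

variable {i j : Fin 2 ⊕ Fin 2} {p q : ℕ} {a b c di dj m n : ℤ}

theorem X_pow_mem_coxPiece (h : p * coxWeight i = n) : (X i ^ p : CoxRing k) ∈ coxPiece k R n := by
  rw [← h, ← nsmul_eq_mul]
  exact (isWeightedHomogeneous_X k coxWeight i).pow p

variable (k R) in
theorem coxPiece_zero : coxPiece k R 0 = 1 := by
  ext f
  rw [Submodule.mem_one]
  exact IsCoxDegreeZero.mem_range_algebraMap.symm

instance : Module.Projective R (coxPiece k R 0) :=
  .of_equiv ((LinearEquiv.ofInjective (Algebra.linearMap R (CoxRing k))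
    IsCoxDegreeZero.algebraMap_injective).trans
      (LinearEquiv.ofEq _ _ (Submodule.one_eq_range.symm.trans (coxPiece_zero k R).symm)))

theorem weight_coxWeight_single : Finsupp.weight coxWeight (.single i p) = p * coxWeight i := by
  rw [Finsupp.weight_single, nsmul_eq_mul]

theorem mem_coxPiece_of_X_pow_mul_mem (h : p * coxWeight i + a = n) {z : CoxRing k}
    (hz : X i ^ p * z ∈ coxPiece k R n) : z ∈ coxPiece k R a :=
  isWeightedHomogeneous_of_monomial_mul (X_pow_eq_monomial (R := k) ▸ hz)
    (weight_coxWeight_single.symm ▸ h)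

theorem exists_eq_X_pow_mul_add_X_pow_mul (hi : p * coxWeight i + a = n)
    (hj : q * coxWeight j + b = n)
    (cover : ∀ d, Finsupp.weight coxWeight d = n → p ≤ d i ∨ q ≤ d j) :
    ∀ z ∈ coxPiece k R n, ∃ x ∈ coxPiece k R a, ∃ y ∈ coxPiece k R b,
      z = X i ^ p * x + X j ^ q * y := by
  intro z hz
  simp only [X_pow_eq_monomial]
  obtain ⟨x, y, hx, hy, h⟩ := exists_eq_monomial_mul_add_monomial_mul hz
    (weight_coxWeight_single.symm ▸ hi) (weight_coxWeight_single.symm ▸ hj)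
    fun d hd ↦ by simpa only [Finsupp.single_le_iff] using cover d hd
  exact ⟨x, hx, y, hy, h⟩

theorem koszulStrand_X_pow_shortExact (hij : i ≠ j) (hi : p * coxWeight i = di)
    (hj : q * coxWeight j = dj) (hia : di + a = m) (hjb : dj + b = m) (hjc : dj + c = a)
    (hic : di + c = b) (cover : ∀ d, Finsupp.weight coxWeight d = m → p ≤ d i ∨ q ≤ d j) :
    (koszulStrand (𝒜 := coxPiece k R) ⟨X i ^ p, X_pow_mem_coxPiece hi⟩
      ⟨X j ^ q, X_pow_mem_coxPiece hj⟩ hia hjb hjc hic).ShortExact :=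
  koszulStrand_shortExact _ _ _ _ _ _ (isRegular_X_pow p).left
    (fun _ ↦ X_pow_dvd_of_dvd_X_pow_mul hij)
    (fun _ ↦ mem_coxPiece_of_X_pow_mul_mem (hi ▸ hic))
    (exists_eq_X_pow_mul_add_X_pow_mul (hi ▸ hia) (hj ▸ hjb) cover)

theorem exists_eq_mul_of_linearMap_coxPiece (hn : m + a = n)
    (φ : coxPiece k R m →ₗ[R] coxPiece k R n) :
    ∃ g : coxPiece k R a, ∀ z, (φ z : CoxRing k) = g * z := by
  obtain ⟨p, i, j, l, hij, hi, hj, hl⟩ : ∃ (p : ℕ) (i j l : Fin 2 ⊕ Fin 2), i ≠ j ∧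
      p * coxWeight i = m ∧ p * coxWeight j = m ∧ p * coxWeight l + m = 0 := by
    obtain ⟨p, rfl | rfl⟩ := m.eq_nat_or_neg
    · exact ⟨p, .inl 0, .inl 1, .inr 0, by decide, by simp [coxWeight]⟩
    · exact ⟨p, .inr 0, .inr 1, .inl 0, by decide, by simp [coxWeight]⟩
  exact exists_eq_mul_of_coprime (coxPiece_zero k R).le (X_pow_mem_coxPiece rfl) hl
    (isRegular_X_pow p).left ⟨X i ^ p, X_pow_mem_coxPiece hi⟩ ⟨X j ^ p, X_pow_mem_coxPiece hj⟩
    (isRegular_X_pow p).left (fun _ ↦ X_pow_dvd_of_dvd_X_pow_mul hij)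
    (fun _ ↦ mem_coxPiece_of_X_pow_mul_mem (hi ▸ hn)) φ

variable (k R) in
/-- The strand `M₁ ⟶ M₀ × M₋ⱼ ⟶ M₋ⱼ₋₁` of the Koszul complex of `x₀ ^ (j + 1)` and `x₁`, where `Mₙ`
is `coxPiece k R n`. -/
noncomputable abbrev xStrand (j : ℕ) : ShortComplex (ModuleCat R) :=
  koszulStrand (𝒜 := coxPiece k R) (a := 0) (b := -j) (c := 1) (m := -(j + 1 : ℕ))
    ⟨X (.inr 0) ^ (j + 1), X_pow_mem_coxPiece (mul_neg_one _)⟩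
    ⟨X (.inr 1) ^ 1, X_pow_mem_coxPiece (mul_neg_one _)⟩
    (add_zero _) (by push_cast; ring) (neg_add_cancel _) (by push_cast; ring)

theorem xStrand_shortExact (j : ℕ) : (xStrand k R j).ShortExact :=
  koszulStrand_X_pow_shortExact (by decide) (mul_neg_one _) (mul_neg_one _) _ _ _ _
    fun d hd ↦ by rw [weight_coxWeight_apply] at hd; lia

variable (k R) in
/-- The strand `M₋₁ ⟶ M₀ × M₀ ⟶ M₁` of the Koszul complex of `s₀` and `s₁`, where `Mₙ` is
`coxPiece k R n`. -/
noncomputable abbrev sStrand : ShortComplex (ModuleCat R) :=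
  koszulStrand (𝒜 := coxPiece k R) (a := 0) (b := 0) (c := -1) (m := 1)
    ⟨X (.inl 0) ^ 1, X_pow_mem_coxPiece (mul_one _)⟩
    ⟨X (.inl 1) ^ 1, X_pow_mem_coxPiece (mul_one _)⟩
    (add_zero _) (add_zero _) (add_neg_cancel _) (add_neg_cancel _)

theorem sStrand_shortExact : (sStrand k R).ShortExact :=
  koszulStrand_X_pow_shortExact (by decide) (mul_one _) (mul_one _) _ _ _ _
    fun d hd ↦ by rw [weight_coxWeight_apply] at hd; lia

theorem subsingleton_abelianExt_one_coxPiece (ℓ j : ℕ) (hj : j ≤ ℓ + 1) :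
    Subsingleton (Abelian.Ext (ModuleCat.of R (coxPiece k R (-j)))
      (ModuleCat.of R (coxPiece k R (-ℓ))) 1) := by
  induction j with
  | zero =>
    rw [Nat.cast_zero, neg_zero]
    infer_instance
  | succ j ih =>
    have ext_one_prev := ih (by lia)
    refine subsingleton_abelianExt_one_of_forall_extend (xStrand_shortExact j) fun f ↦ ?_
    let φ : coxPiece k R 1 →ₗ[R] coxPiece k R (-ℓ) := f.hom
    obtain ⟨g, hg⟩ := exists_eq_mul_of_linearMap_coxPiece (a := -(ℓ + 1 : ℕ)) (by push_cast; ring) φ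
    obtain ⟨x, hx, y, hy, hxy⟩ := exists_eq_X_pow_mul_add_X_pow_mul (k := k) (R := R)
      (i := .inr 0) (j := .inr 1) (p := j + 1) (q := 1) (n := -(ℓ + 1 : ℕ)) (a := j - ℓ) (b := -ℓ)
      (by simp only [coxWeight, Sum.elim_inr, Pi.neg_apply, Pi.one_apply]; push_cast; ring)
      (by simp only [coxWeight, Sum.elim_inr, Pi.neg_apply, Pi.one_apply]; push_cast; ring)
      (fun d hd ↦ by rw [weight_coxWeight_apply] at hd; lia) g g.2
    refine ⟨ModuleCat.ofHom (.coprod (gradedMul ⟨y, hy⟩ (add_zero _))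
      (-gradedMul ⟨x, hx⟩ (by ring))), ?_⟩
    refine ModuleCat.hom_ext (LinearMap.ext fun (z : coxPiece k R 1) ↦ Subtype.ext ?_)
    let x₀ : CoxRing k := X (.inr 0)
    let x₁ : CoxRing k := X (.inr 1)
    have g_mul : y * (x₁ ^ 1 * z) + -(x * -(x₀ ^ (j + 1) * z)) = g * z := by
      rw [hxy]
      ring
    exact g_mul.trans (hg z).symm

variable (k R) in
theorem not_subsingleton_abelianExt_two_coxPiece [Nontrivial k] (ℓ : ℕ) :
    ¬Subsingleton (Abelian.Ext (ModuleCat.of R (coxPiece k R (-(ℓ + 1 : ℕ))))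
      (ModuleCat.of R (coxPiece k R (-(ℓ + 1 : ℕ)))) 2) := by
  intro vanish
  have ext_one := subsingleton_abelianExt_one_coxPiece (k := k) (R := R) (ℓ + 1) ℓ (by lia)
  have ext_one_of_vanish : Subsingleton (Abelian.Ext (ModuleCat.of R (coxPiece k R 1))
      (ModuleCat.of R (coxPiece k R (-(ℓ + 1 : ℕ)))) 1) :=
    subsingleton_abelianExt_left (xStrand_shortExact ℓ)
  obtain ⟨f, hf⟩ := exists_extend_of_subsingleton_abelianExt_one sStrand_shortExact
    (ModuleCat.ofHom (gradedMul (𝒜 := coxPiece k R) (m := -1) (n := -(ℓ + 1 : ℕ))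
      ⟨X (.inr 0) ^ ℓ, X_pow_mem_coxPiece (mul_neg_one _)⟩ (by push_cast; ring)))
  let φ : coxPiece k R 0 × coxPiece k R 0 →ₗ[R] coxPiece k R (-(ℓ + 1 : ℕ)) := f.hom
  obtain ⟨α, hα⟩ := exists_eq_mul_of_linearMap_coxPiece (zero_add _) (φ ∘ₗ .inl R _ _)
  obtain ⟨β, hβ⟩ := exists_eq_mul_of_linearMap_coxPiece (zero_add _) (φ ∘ₗ .inr R _ _)
  have φ_eq (y : coxPiece k R 0 × coxPiece k R 0) : (φ y : CoxRing k) = α * y.1 + β * y.2 := by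
    rw [← hα, ← hβ, ← Submodule.coe_add, LinearMap.comp_apply, LinearMap.comp_apply, ← map_add,
      LinearMap.inl_apply, LinearMap.inr_apply, Prod.fst_add_snd]
  let s₀ : CoxRing k := X (.inl 0)
  let s₁ : CoxRing k := X (.inl 1)
  let x₀ : CoxRing k := X (.inr 0)
  have x₀_pow_eq : x₀ ^ ℓ * x₀ ^ 1 = α * (s₁ ^ 1 * x₀ ^ 1) + β * -(s₀ ^ 1 * x₀ ^ 1) := by
    have h := LinearMap.congr_fun (congrArg ModuleCat.Hom.hom hf)
      ⟨x₀ ^ 1, X_pow_mem_coxPiece (mul_neg_one _)⟩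
    exact (congrArg Subtype.val h).symm.trans (φ_eq _)
  have eval_eq := congrArg (eval (Sum.elim 0 1)) x₀_pow_eq
  simp [s₀, s₁, x₀] at eval_eq

variable (k R) in
theorem linearMap_end_coxPiece_bijective (n : ℤ) :
    Function.Bijective (Algebra.linearMap R (Module.End R (coxPiece k R n))) := by
  constructor
  · obtain ⟨p, i, hi⟩ : ∃ (p : ℕ) (i : Fin 2 ⊕ Fin 2), p * coxWeight i = n := by
      obtain ⟨p, rfl | rfl⟩ := n.eq_nat_or_neg
      · exact ⟨p, .inl 0, mul_one _⟩
      · exact ⟨p, .inr 0, mul_neg_one _⟩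
    intro r r' h
    have hr := congrArg Subtype.val (LinearMap.congr_fun h ⟨X i ^ p, X_pow_mem_coxPiece hi⟩)
    simp only [Algebra.linearMap_apply, Module.algebraMap_end_apply, Submodule.coe_smul,
      Algebra.smul_def] at hr
    exact IsCoxDegreeZero.algebraMap_injective ((isRegular_X_pow p).right hr)
  · intro φ
    obtain ⟨g, hg⟩ := exists_eq_mul_of_linearMap_coxPiece (add_zero n) φ
    obtain ⟨r, hr⟩ := Submodule.mem_one.1 ((coxPiece_zero k R).le g.2)
    refine ⟨r, LinearMap.ext fun z ↦ Subtype.ext ?_⟩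
    rw [hg, ← hr, ← Algebra.smul_def]
    rfl

variable (k R) in
theorem coxPiece_neg_natCast (n : ℕ) :
    coxPiece k R (-n) = Submodule.span R {X (.inr 0), X (.inr 1)} ^ n := by
  induction n with
  | zero => simpa using coxPiece_zero k R
  | succ n ih =>
    rw [pow_succ', ← ih]
    refine le_antisymm (fun z hz ↦ ?_) (Submodule.mul_le.2 fun x hx y hy ↦ ?_)
    · obtain ⟨x, hx, y, hy, rfl⟩ := exists_eq_X_pow_mul_add_X_pow_mul (i := .inr 0) (j := .inr 1)
        (p := 1) (q := 1) (a := -n) (b := -n) (by simp [coxWeight]) (by simp [coxWeight])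
        (fun d hd ↦ by rw [weight_coxWeight_apply] at hd; lia) z hz
      rw [pow_one, pow_one]
      exact add_mem (Submodule.mul_mem_mul (Submodule.mem_span_of_mem (by simp)) hx)
        (Submodule.mul_mem_mul (Submodule.mem_span_of_mem (by simp)) hy)
    · have span_le : Submodule.span R {X (.inr 0), X (.inr 1)} ≤ coxPiece k R (-1) :=
        Submodule.span_le.2 (by rintro _ (rfl | rfl) <;> exact isWeightedHomogeneous_X ..)
      have mul_mem := SetLike.mul_mem_graded (span_le hx) hy
      rwa [← neg_add_rev, ← Nat.cast_succ] at mul_mem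

variable {x y : R}

theorem nonempty_linearEquiv_coxPiece
    (hx : algebraMap R (CoxRing k) x = X (.inl 0) * X (.inr 0))
    (hy : algebraMap R (CoxRing k) y = X (.inl 0) * X (.inr 1)) (ℓ : ℕ) :
    Nonempty (↥(Ideal.span {x, y} ^ ℓ) ≃ₗ[R] coxPiece k R (-ℓ)) := by
  let toCoxRing := Algebra.ofId R (CoxRing k)
  let s₀_pow_mul := LinearMap.mulLeft R (X (.inl 0) ^ ℓ : CoxRing k)
  have map_span_pair : Submodule.map toCoxRing.toLinearMap (Submodule.span R {x, y}) =
      Submodule.span R {(X (.inl 0) : CoxRing k)} * Submodule.span R {X (.inr 0), X (.inr 1)} := by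
    rw [Submodule.map_span, Submodule.span_mul_span, Set.image_pair, Set.singleton_mul,
      Set.image_pair, ← hx, ← hy]
    rfl
  have map_pow_eq : Submodule.map toCoxRing.toLinearMap (Submodule.span R {x, y} ^ ℓ) =
      (coxPiece k R (-ℓ)).map s₀_pow_mul := by
    rw [Submodule.map_pow, map_span_pair, mul_pow, ← coxPiece_neg_natCast, Submodule.span_pow,
      Set.singleton_pow, Submodule.mul_eq_map₂, Submodule.map₂_span_singleton_eq_map]
    rfl
  exact ⟨(Submodule.equivMapOfInjective toCoxRing.toLinearMap
      IsCoxDegreeZero.algebraMap_injective _).trans <| (LinearEquiv.ofEq _ _ map_pow_eq).trans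
        (Submodule.equivMapOfInjective s₀_pow_mul (isRegular_X_pow ℓ).left _).symm⟩

end CoxPieces

theorem exists_isCoxDegreeZero {k R : Type u} [CommRing k] [CommRing R]
    (e : MvPolynomial (Fin 2 × Fin 2) k ⧸ detIdeal k ≃+* R) :
    ∃ _ : Algebra R (CoxRing k), IsCoxDegreeZero k R ∧
      ∀ i j, algebraMap R (CoxRing k) (e (Ideal.Quotient.mk _ (X (i, j)))) =
        X (.inl i) * X (.inr j) := by
  let segreQuotient : MvPolynomial (Fin 2 × Fin 2) k ⧸ detIdeal k →+* CoxRing k :=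
    Ideal.Quotient.lift (detIdeal k) (segreMap k : _ →+* CoxRing k)
      fun f hf ↦ RingHom.mem_ker.1 (ker_segreMap.ge hf)
  let _ : Algebra R (CoxRing k) := (segreQuotient.comp e.symm).toAlgebra
  have algebraMap_mk (f : MvPolynomial (Fin 2 × Fin 2) k) :
      algebraMap R (CoxRing k) (e (Ideal.Quotient.mk _ f)) = segreMap k f :=
    congrArg segreQuotient (e.symm_apply_apply _)
  have segreQuotient_injective : Function.Injective segreQuotient :=
    RingHom.lift_injective_of_ker_le_ideal _ _ ker_segreMap.le
  refine ⟨inferInstance, ⟨segreQuotient_injective.comp e.symm.injective, fun {f} ↦ ?_⟩,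
    fun i j ↦ (algebraMap_mk _).trans (segreMap_X i j)⟩
  rw [← mem_range_segreMap]
  constructor
  · rintro ⟨r, rfl⟩
    obtain ⟨f, hf⟩ := Ideal.Quotient.mk_surjective (e.symm r)
    exact ⟨f, congrArg segreQuotient hf⟩
  · rintro ⟨f, rfl⟩
    exact ⟨e (Ideal.Quotient.mk _ f), algebraMap_mk f⟩

theorem pow_p_exactly_one_semidualizing_general (k : Type u) [CommRing k] [Nontrivial k]
    (R : Type u) [CommRing R]
    (e : (MvPolynomial (Fin 2 × Fin 2) k ⧸
      Ideal.span {(X (0, 0) : MvPolynomial (Fin 2 × Fin 2) k) * X (1, 1)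
        - X (0, 1) * X (1, 0)}) ≃+* R)
    (x11 x12 : R)
    (h11 : x11 = e (Ideal.Quotient.mk _ (X (0, 0))))
    (h12 : x12 = e (Ideal.Quotient.mk _ (X (0, 1))))
    (ℓ : ℕ) (hℓ : 1 ≤ ℓ)
    (q : Ideal R) (hq : q = Ideal.span {x12, x11} ^ ℓ) :
    Nonempty ((↥q →ₗ[R] ↥q) ≃ₗ[R] R) ∧
    Subsingleton (((Ext R (ModuleCat R) 1).obj
      (Opposite.op (ModuleCat.of R ↥q))).obj (ModuleCat.of R ↥q)) ∧
    ¬ Subsingleton (((Ext R (ModuleCat R) 2).obj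
      (Opposite.op (ModuleCat.of R ↥q))).obj (ModuleCat.of R ↥q)) := by
  obtain ⟨_, _, algebraMap_eq⟩ := exists_isCoxDegreeZero e
  obtain ⟨n, rfl⟩ := Nat.exists_eq_add_of_le' hℓ
  obtain ⟨E⟩ : Nonempty (q ≃ₗ[R] coxPiece k R (-(n + 1 : ℕ))) := by
    rw [hq, h11, h12, Set.pair_comm]
    exact nonempty_linearEquiv_coxPiece (algebraMap_eq 0 0) (algebraMap_eq 0 1) _
  refine ⟨⟨E.conj.trans (LinearEquiv.ofBijective _ (linearMap_end_coxPiece_bijective k R _)).symm⟩,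
    ?_, ?_⟩
  · rw [subsingleton_ext_iff_subsingleton_abelianExt, subsingleton_abelianExt_congr E.toModuleIso]
    exact subsingleton_abelianExt_one_coxPiece _ _ (Nat.le_succ _)
  · rw [subsingleton_ext_iff_subsingleton_abelianExt, subsingleton_abelianExt_congr E.toModuleIso]
    exact not_subsingleton_abelianExt_two_coxPiece k R n

/-- Over the determinantal ring `R = k[X₁₁,X₁₂,X₂₁,X₂₂]/(X₁₁X₂₂ − X₁₂X₂₁)` with
`p = (x₁₂, x₁₁)` and `ℓ ≥ 1`, the ideal `pˡ` is exactly 1-semidualizing: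
`Hom_R(pˡ,pˡ) ≅ R`, `Ext¹_R(pˡ,pˡ) = 0`, and `Ext²_R(pˡ,pˡ) ≠ 0`. -/
theorem pow_p_exactly_one_semidualizing (k : Type) [Field k]
    (R : Type) [CommRing R]
    (e : (MvPolynomial (Fin 2 × Fin 2) k ⧸
      Ideal.span {(X (0, 0) : MvPolynomial (Fin 2 × Fin 2) k) * X (1, 1)
        - X (0, 1) * X (1, 0)}) ≃+* R)
    (x11 x12 : R)
    (h11 : x11 = e (Ideal.Quotient.mk _ (X (0, 0))))
    (h12 : x12 = e (Ideal.Quotient.mk _ (X (0, 1))))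
    (ℓ : ℕ) (hℓ : 1 ≤ ℓ)
    (q : Ideal R) (hq : q = Ideal.span {x12, x11} ^ ℓ) :
    Nonempty ((↥q →ₗ[R] ↥q) ≃ₗ[R] R) ∧
    Subsingleton (((Ext R (ModuleCat R) 1).obj
      (Opposite.op (ModuleCat.of R ↥q))).obj (ModuleCat.of R ↥q)) ∧
    ¬ Subsingleton (((Ext R (ModuleCat R) 2).obj
      (Opposite.op (ModuleCat.of R ↥q))).obj (ModuleCat.of R ↥q)) :=
  pow_p_exactly_one_semidualizing_general k R e x11 x12 h11 h12 ℓ hℓ q hq
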